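/- Let Z, X be finite sets and W a channel from X to Z. Let C = {x_1,…,x_N} ⊆ X^? be a multiset of codewords partitioned into D and C∖D with |D| = k, and let P̂, P̂₁, P̂₂ be the uniform-mixture output distributions induced by C, D, C∖D respectively, so that P̂ = (k/N) P̂₁ + (1−k/N) P̂₂. Suppose Q is a distribution on Z, T ⊆ Z with Q(Z∖T) ≤ α, P̂₂(T) ≤ 1 − α − δ − γ, and β_α(Q, P̂) ≥ 1 − α − δ. Then k/N ≥ γ. -/

import Mathlib

open Finset

/-- Optimal probability of missed detection at false-alarm level `α`:
`β_α(Q,P) = inf { P(T) : T ⊆ Z, Q(Z \ T) ≤ α }`. -/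
noncomputable def betaAlpha {Z : Type*} [Fintype Z] [DecidableEq Z]
    (α : ℝ) (Q P : Z → ℝ) : ℝ :=
  sInf {b : ℝ | ∃ T : Finset Z, (∑ z ∈ Tᶜ, Q z) ≤ α ∧ b = ∑ z ∈ T, P z}

theorem betaAlpha_le_sum {Z : Type*} [Fintype Z] [DecidableEq Z] {α : ℝ} {Q : Z → ℝ}
    (P : Z → ℝ) {T : Finset Z} (hT : ∑ z ∈ Tᶜ, Q z ≤ α) :
    betaAlpha α Q P ≤ ∑ z ∈ T, P z := by
  have finite_values :
      {b : ℝ | ∃ S : Finset Z, ∑ z ∈ Sᶜ, Q z ≤ α ∧ b = ∑ z ∈ S, P z}.Finite := by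
    refine (Set.finite_range fun S : Finset Z => ∑ z ∈ S, P z).subset ?_
    rintro _ ⟨S, -, rfl⟩
    exact Set.mem_range_self S
  exact csInf_le finite_values.bddBelow ⟨T, hT, rfl⟩

theorem sum_mixture_le_add_sum {ι R : Type*} [Ring R] [PartialOrder R] [IsOrderedRing R]
    {s : Finset ι} {f g : ι → R} {t : R} (ht : 0 ≤ t) (hf : ∑ i ∈ s, f i ≤ 1)
    (hg : 0 ≤ ∑ i ∈ s, g i) :
    ∑ i ∈ s, (t * f i + (1 - t) * g i) ≤ t + ∑ i ∈ s, g i :=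
  calc
    ∑ i ∈ s, (t * f i + (1 - t) * g i)
        = t * ∑ i ∈ s, f i + (1 - t) * ∑ i ∈ s, g i := by
      rw [sum_add_distrib, mul_sum, mul_sum]
    _ ≤ t * 1 + 1 * ∑ i ∈ s, g i := by
      gcongr
      exact sub_le_self 1 ht
    _ = t + ∑ i ∈ s, g i := by rw [mul_one, one_mul]

theorem betaAlpha_mixture_le_add_sum {Z : Type*} [Fintype Z] [DecidableEq Z]
    {α t : ℝ} {Q P₁ P₂ : Z → ℝ} {T : Finset Z} (ht : 0 ≤ t) (hT : ∑ z ∈ Tᶜ, Q z ≤ α)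
    (hP₁ : ∑ z ∈ T, P₁ z ≤ 1) (hP₂ : 0 ≤ ∑ z ∈ T, P₂ z) :
    betaAlpha α Q (fun z => t * P₁ z + (1 - t) * P₂ z) ≤ t + ∑ z ∈ T, P₂ z :=
  (betaAlpha_le_sum _ hT).trans (sum_mixture_le_add_sum ht hP₁ hP₂)

theorem subcodebook_size_lower_bound_general {Z : Type*} [Fintype Z] [DecidableEq Z]
    {Q P P₁ P₂ : Z → ℝ} {α δ γ t : ℝ} {T : Finset Z}
    (hP₁_nonneg : ∀ z, 0 ≤ P₁ z) (hP₁_sum : ∑ z, P₁ z ≤ 1) (hP₂_nonneg : ∀ z, 0 ≤ P₂ z)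
    (ht : 0 ≤ t) (hmix : ∀ z, P z = t * P₁ z + (1 - t) * P₂ z)
    (hT : ∑ z ∈ Tᶜ, Q z ≤ α) (hP₂T : ∑ z ∈ T, P₂ z ≤ 1 - α - δ - γ)
    (hbeta : 1 - α - δ ≤ betaAlpha α Q P) :
    γ ≤ t := by
  obtain rfl : P = fun z => t * P₁ z + (1 - t) * P₂ z := funext hmix
  have hP₁T : ∑ z ∈ T, P₁ z ≤ 1 := (sum_le_univ_sum_of_nonneg hP₁_nonneg).trans hP₁_sum
  have hP₂T_nonneg : 0 ≤ ∑ z ∈ T, P₂ z := sum_nonneg fun z _ => hP₂_nonneg z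
  have hbeta_le := betaAlpha_mixture_le_add_sum ht hT hP₁T hP₂T_nonneg
  linarith

theorem subcodebook_size_lower_bound {Z : Type*} [Fintype Z] [DecidableEq Z]
    (Q Phat P1 P2 : Z → ℝ)
    (hQ0 : ∀ z, 0 ≤ Q z) (hQ1 : ∑ z, Q z = 1)
    (hPhat0 : ∀ z, 0 ≤ Phat z) (hPhat1 : ∑ z, Phat z = 1)
    (hP10 : ∀ z, 0 ≤ P1 z) (hP11 : ∑ z, P1 z = 1)
    (hP20 : ∀ z, 0 ≤ P2 z) (hP21 : ∑ z, P2 z = 1)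
    (N k : ℕ) (hN : 0 < N) (hk : k ≤ N)
    (hmix : ∀ z, Phat z =
      ((k : ℝ) / (N : ℝ)) * P1 z + (1 - (k : ℝ) / (N : ℝ)) * P2 z)
    (α δ γ : ℝ) (T : Finset Z) (hT : ∑ z ∈ Tᶜ, Q z ≤ α)
    (hP2T : ∑ z ∈ T, P2 z ≤ 1 - α - δ - γ)
    (hbeta : 1 - α - δ ≤ betaAlpha α Q Phat) :
    γ ≤ (k : ℝ) / (N : ℝ) :=
  subcodebook_size_lower_bound_general hP10 hP11.le hP20 (by positivity) hmix hT hP2T hbeta
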